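/- Let ε > 0, ε_S ∈ (0,1), S_max > 0, κ_T ≥ 0, θ ∈ (0,1), α_max > 0 and 0 < α ≤ α_max. Let f : ℝ^d → ℝ be twice continuously differentiable with L_H-Lipschitz continuous Hessian (L_H > 0), let x ∈ ℝ^d, S ∈ ℝ^{l×d}, ŝ ∈ ℝ^l, and let M = [∇f(x) | ∇²f(x)] ∈ ℝ^{d×(d+1)}. Assume: (a) ‖S M z‖² ≥ (1−ε_S)‖M z‖² for all z ∈ ℝ^{d+1}; (b) ‖S‖ ≤ S_max; (c) ‖S∇f(x) + S∇²f(x)Sᵀŝ + (1/α)·S Sᵀŝ·‖Sᵀŝ‖‖ ≤ κ_T·‖Sᵀŝ‖²; (d) ‖∇f(x + Sᵀŝ)‖ ≥ ε; (e) m̂(ŝ) ≤ f(x); (f) f(x) − f(x + Sᵀŝ) ≥ θ·(q̂(0) − q̂(ŝ)). Then f(x) − f(x + Sᵀŝ) ≥ (θ/(3α_max))·(ε/2)^{3/2}·min{ 2^{3/2}/L_H^{3/2}, ( √(1−ε_S)/(S_max/α + κ_T) )^{3/2} }. -/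

import Mathlib

open scoped BigOperators NNReal
open MeasureTheory ProbabilityTheory

namespace RARC

noncomputable def enorm {n : ℕ} (v : Fin n → ℝ) : ℝ := Real.sqrt (∑ i, v i ^ 2)

noncomputable def opNorm {m n : ℕ} (S : Matrix (Fin m) (Fin n) ℝ) : ℝ :=
  sSup {c : ℝ | ∃ v : Fin n → ℝ, enorm v = 1 ∧ c = enorm (S.mulVec v)}

noncomputable def grad {n : ℕ} (f : (Fin n → ℝ) → ℝ) (x : Fin n → ℝ) : Fin n → ℝ :=
  fun i => fderiv ℝ f x (Pi.single i 1)

noncomputable def hess {n : ℕ} (f : (Fin n → ℝ) → ℝ) (x : Fin n → ℝ) :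
    Matrix (Fin n) (Fin n) ℝ :=
  Matrix.of fun i j =>
    fderiv ℝ (fun y => fderiv ℝ f y (Pi.single j 1)) x (Pi.single i 1)

noncomputable def qhat {d l : ℕ} (f : (Fin d → ℝ) → ℝ) (x : Fin d → ℝ)
    (S : Matrix (Fin l) (Fin d) ℝ) (s : Fin l → ℝ) : ℝ :=
  f x + (∑ i, S.mulVec (grad f x) i * s i)
    + (1/2) * (∑ i, s i * (S * hess f x * S.transpose).mulVec s i)

noncomputable def mhat {d l : ℕ} (f : (Fin d → ℝ) → ℝ) (x : Fin d → ℝ)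
    (S : Matrix (Fin l) (Fin d) ℝ) (α : ℝ) (s : Fin l → ℝ) : ℝ :=
  qhat f x S s + (1/(3*α)) * enorm (S.transpose.mulVec s) ^ 3

noncomputable def lambdaMin {n : ℕ} (A : Matrix (Fin n) (Fin n) ℝ) : ℝ :=
  sInf {t : ℝ | ∃ v : Fin n → ℝ, enorm v = 1 ∧ t = ∑ i, v i * A.mulVec v i}

def LipschitzHessian {n : ℕ} (f : (Fin n → ℝ) → ℝ) (L : ℝ) : Prop :=
  ∀ x y : Fin n → ℝ, opNorm (hess f y - hess f x) ≤ L * enorm (y - x)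

noncomputable def augM {d : ℕ} (f : (Fin d → ℝ) → ℝ) (x : Fin d → ℝ) :
    Matrix (Fin d) (Fin (d+1)) ℝ :=
  Matrix.of fun i j => Fin.cases (grad f x i) (fun j' => hess f x i j') j

noncomputable def gaussVec (l : ℕ) : Measure (Fin l → ℝ) :=
  Measure.pi fun _ => gaussianReal 0 (l : ℝ≥0)⁻¹

noncomputable def scaledGaussian (l d : ℕ) : Measure (Fin l → Fin d → ℝ) :=
  Measure.pi fun _ : Fin l => Measure.pi fun _ : Fin d => gaussianReal 0 (l : ℝ≥0)⁻¹



lemma enorm_eq {n : ℕ} (v : Fin n → ℝ) : enorm v = ‖WithLp.toLp 2 v‖ := by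
  simp [enorm, EuclideanSpace.norm_eq]

lemma enorm_nonneg {n : ℕ} (v : Fin n → ℝ) : 0 ≤ enorm v := Real.sqrt_nonneg _

lemma enorm_add {n : ℕ} (v w : Fin n → ℝ) : enorm (v + w) ≤ enorm v + enorm w := by
  simp only [enorm_eq, WithLp.toLp_add]
  exact norm_add_le _ _

lemma enorm_smul {n : ℕ} (c : ℝ) (v : Fin n → ℝ) : enorm (c • v) = |c| * enorm v := by
  simp only [enorm_eq, WithLp.toLp_smul, norm_smul, Real.norm_eq_abs]

lemma enorm_sq {n : ℕ} (v : Fin n → ℝ) : enorm v ^ 2 = ∑ i, v i ^ 2 :=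
  Real.sq_sqrt (Finset.sum_nonneg fun i _ => sq_nonneg _)

lemma dot_le {n : ℕ} (v w : Fin n → ℝ) : v ⬝ᵥ w ≤ enorm v * enorm w :=
  Real.sum_mul_le_sqrt_mul_sqrt _ _ _

lemma bdd {m n : ℕ} (S : Matrix (Fin m) (Fin n) ℝ) :
    BddAbove {c : ℝ | ∃ v : Fin n → ℝ, enorm v = 1 ∧ c = enorm (S.mulVec v)} := by
  refine ⟨Real.sqrt (∑ i, enorm (S i) ^ 2), ?_⟩
  rintro c ⟨v, hv, rfl⟩
  refine Real.sqrt_le_sqrt (Finset.sum_le_sum fun i _ => ?_)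
  have h : (∑ j, S i j * v j) ^ 2 ≤ (∑ j, S i j ^ 2) * ∑ j, v j ^ 2 :=
    Finset.sum_mul_sq_le_sq_mul_sq _ _ _
  rw [← enorm_sq v, hv, ← enorm_sq] at h
  simpa [Matrix.mulVec, dotProduct] using h

lemma opNorm_bound {m n : ℕ} (S : Matrix (Fin m) (Fin n) ℝ) (v : Fin n → ℝ) :
    enorm (S.mulVec v) ≤ opNorm S * enorm v := by
  rcases (enorm_nonneg v).eq_or_lt with h | h
  · have hv : v = 0 := by
      rw [enorm_eq] at h
      have := norm_eq_zero.1 h.symm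
      simpa using this
    subst hv
    simp [enorm]
  · have h1 : enorm (S.mulVec ((enorm v)⁻¹ • v)) ≤ opNorm S := by
      refine le_csSup (bdd S) ⟨_, ?_, rfl⟩
      rw [enorm_smul, abs_of_pos (inv_pos.2 h), inv_mul_cancel₀ h.ne']
    rw [Matrix.mulVec_smul, enorm_smul, abs_of_pos (inv_pos.2 h)] at h1
    rwa [inv_mul_le_iff₀ h, mul_comm] at h1

lemma hess_eq {n : ℕ} {f : (Fin n → ℝ) → ℝ} (hf : ContDiff ℝ 2 f) (x : Fin n → ℝ) (i j : Fin n) :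
    hess f x i j = fderiv ℝ (fderiv ℝ f) x (Pi.single i 1) (Pi.single j 1) := by
  have h1 : Differentiable ℝ (fderiv ℝ f) :=
    (hf.fderiv_right (m := 1) (by norm_num)).differentiable (by norm_num)
  simp only [hess, Matrix.of_apply]
  rw [fderiv_clm_apply (h1 x) (differentiableAt_const _)]
  simp

lemma hess_symm {n : ℕ} {f : (Fin n → ℝ) → ℝ} (hf : ContDiff ℝ 2 f) (x : Fin n → ℝ) (i j : Fin n) :
    hess f x i j = hess f x j i := by
  rw [hess_eq hf, hess_eq hf]
  exact (hf.contDiffAt.isSymmSndFDerivAt (by simp)) _ _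

lemma pi_expand {n : ℕ} (s : Fin n → ℝ) : s = ∑ i, s i • (Pi.single i (1:ℝ) : Fin n → ℝ) := by
  ext k
  simp [Finset.sum_apply, Pi.single_apply]

lemma hess_dot {n : ℕ} {f : (Fin n → ℝ) → ℝ} (hf : ContDiff ℝ 2 f) (x s u : Fin n → ℝ) :
    u ⬝ᵥ (hess f x).mulVec s = fderiv ℝ (fderiv ℝ f) x s u := by
  conv_rhs => rw [pi_expand s, pi_expand u]
  simp only [map_sum, map_smul, ContinuousLinearMap.sum_apply, ContinuousLinearMap.smul_apply,
    ← hess_eq hf, dotProduct, Matrix.mulVec, smul_eq_mul, Finset.mul_sum]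
  refine Finset.sum_congr rfl fun i _ => Finset.sum_congr rfl fun j _ => ?_
  rw [hess_symm hf x i j]; ring

lemma grad_dot {n : ℕ} (f : (Fin n → ℝ) → ℝ) (x u : Fin n → ℝ) :
    u ⬝ᵥ grad f x = fderiv ℝ f x u := by
  conv_rhs => rw [pi_expand u]
  simp [map_sum, grad, dotProduct]

lemma taylor_dot {n : ℕ} {f : (Fin n → ℝ) → ℝ} (hf : ContDiff ℝ 2 f) {L : ℝ}
    (hLip : LipschitzHessian f L) (x s u : Fin n → ℝ) :
    u ⬝ᵥ (grad f (x + s) - grad f x - (hess f x).mulVec s) ≤ L / 2 * enorm s ^ 2 * enorm u := by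
  have h1 : Differentiable ℝ (fderiv ℝ f) :=
    (hf.fderiv_right (m := 1) (by norm_num)).differentiable (by norm_num)
  let ψ : ℝ → ℝ := fun t => fderiv ℝ f (x + t • s) u - t * fderiv ℝ (fderiv ℝ f) x s u
    - L / 2 * enorm s ^ 2 * enorm u * t ^ 2
  have hψ : ∀ t, HasDerivAt ψ (fderiv ℝ (fderiv ℝ f) (x + t • s) s u
      - fderiv ℝ (fderiv ℝ f) x s u - L * enorm s ^ 2 * enorm u * t) t := by
    intro t
    have hl : HasDerivAt (fun t : ℝ => x + t • s) s t := by
      simpa using ((hasDerivAt_id t).smul_const s).const_add x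
    have h2 : HasDerivAt (fun t : ℝ => fderiv ℝ f (x + t • s))
        (fderiv ℝ (fderiv ℝ f) (x + t • s) s) t :=
      (h1 (x + t • s)).hasFDerivAt.comp_hasDerivAt t hl
    have h3 := h2.clm_apply (hasDerivAt_const t u)
    have h4 := (h3.sub ((hasDerivAt_id t).mul_const (fderiv ℝ (fderiv ℝ f) x s u))).sub
      (((hasDerivAt_id t).pow 2).const_mul (L / 2 * enorm s ^ 2 * enorm u))
    refine HasDerivAt.congr_deriv (f := ψ) h4 ?_
    simp
    ring
  have hanti : AntitoneOn ψ (Set.Icc 0 1) := by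
    refine antitoneOn_of_deriv_nonpos (convex_Icc 0 1)
      (fun t _ => (hψ t).continuousAt.continuousWithinAt)
      (fun t _ => (hψ t).differentiableAt.differentiableWithinAt) ?_
    intro t ht
    rw [interior_Icc] at ht
    rw [(hψ t).deriv, ← hess_dot hf, ← hess_dot hf, ← dotProduct_sub, ← Matrix.sub_mulVec]
    have a1 := dot_le u ((hess f (x + t • s) - hess f x).mulVec s)
    have a2 := opNorm_bound (hess f (x + t • s) - hess f x) s
    have a3 := hLip x (x + t • s)
    rw [add_sub_cancel_left, enorm_smul, abs_of_pos ht.1] at a3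
    have a4 := mul_le_mul_of_nonneg_left (a2.trans (mul_le_mul_of_nonneg_right a3 (enorm_nonneg s)))
      (enorm_nonneg u)
    nlinarith
  have := hanti (Set.left_mem_Icc.2 zero_le_one) (Set.right_mem_Icc.2 zero_le_one) zero_le_one
  simp only [ψ] at this
  rw [dotProduct_sub, dotProduct_sub, grad_dot, grad_dot, hess_dot hf]
  simp at this
  linarith

lemma taylor {n : ℕ} {f : (Fin n → ℝ) → ℝ} (hf : ContDiff ℝ 2 f) {L : ℝ} (hL : 0 < L)
    (hLip : LipschitzHessian f L) (x s : Fin n → ℝ) :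
    enorm (grad f (x + s) - grad f x - (hess f x).mulVec s) ≤ L / 2 * enorm s ^ 2 := by
  have h := taylor_dot hf hLip x s (grad f (x + s) - grad f x - (hess f x).mulVec s)
  set u := grad f (x + s) - grad f x - (hess f x).mulVec s
  have e : u ⬝ᵥ u = enorm u ^ 2 := by
    rw [enorm_sq]; exact Finset.sum_congr rfl fun i _ => (sq _).symm
  rw [e] at h
  rcases (enorm_nonneg u).eq_or_lt with h0 | h0
  · rw [← h0]; positivity
  · nlinarith

lemma augM_mulVec {n : ℕ} (f : (Fin n → ℝ) → ℝ) (x s : Fin n → ℝ) :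
    (augM f x).mulVec (Fin.cons 1 s) = grad f x + (hess f x).mulVec s := by
  ext i
  simp [augM, Matrix.mulVec, dotProduct, Fin.sum_univ_succ]

theorem stmt4 {d l : ℕ} (ε ε_S S_max κ_T θ α_max α L_H : ℝ)
    (hε : 0 < ε) (hεS : ε_S ∈ Set.Ioo (0:ℝ) 1) (hSmax : 0 < S_max) (hκT : 0 ≤ κ_T)
    (hθ : θ ∈ Set.Ioo (0:ℝ) 1) (hαmax : 0 < α_max) (hα : 0 < α) (hααmax : α ≤ α_max)
    (hLH : 0 < L_H)
    (f : (Fin d → ℝ) → ℝ) (hf : ContDiff ℝ 2 f) (hLip : LipschitzHessian f L_H)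
    (x : Fin d → ℝ) (S : Matrix (Fin l) (Fin d) ℝ) (sh : Fin l → ℝ)
    (ha : ∀ z : Fin (d+1) → ℝ,
      enorm (S.mulVec ((augM f x).mulVec z)) ^ 2
        ≥ (1 - ε_S) * enorm ((augM f x).mulVec z) ^ 2)
    (hb : opNorm S ≤ S_max)
    (hc : enorm (S.mulVec (grad f x) + (S * hess f x * S.transpose).mulVec sh
            + ((1/α) * enorm (S.transpose.mulVec sh)) • (S * S.transpose).mulVec sh)
          ≤ κ_T * enorm (S.transpose.mulVec sh) ^ 2)
    (hd : enorm (grad f (x + S.transpose.mulVec sh)) ≥ ε)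
    (he : mhat f x S α sh ≤ f x)
    (hf' : f x - f (x + S.transpose.mulVec sh) ≥ θ * (qhat f x S 0 - qhat f x S sh)) :
    f x - f (x + S.transpose.mulVec sh)
      ≥ (θ / (3 * α_max)) * (ε/2) ^ ((3:ℝ)/2)
        * min ((2:ℝ) ^ ((3:ℝ)/2) / L_H ^ ((3:ℝ)/2))
            ((Real.sqrt (1 - ε_S) / (S_max / α + κ_T)) ^ ((3:ℝ)/2)) := by
  obtain ⟨hε1, hε2⟩ := hεS
  obtain ⟨hθ1, hθ2⟩ := hθ
  have hq0 : qhat f x S 0 = f x := by simp [qhat]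
  rw [hq0] at hf'
  unfold mhat at he
  have hSS : (S * S.transpose).mulVec sh = S.mulVec (S.transpose.mulVec sh) := by
    rw [Matrix.mulVec_mulVec]
  have hSH : (S * hess f x * S.transpose).mulVec sh
      = S.mulVec ((hess f x).mulVec (S.transpose.mulVec sh)) := by
    rw [Matrix.mulVec_mulVec, Matrix.mulVec_mulVec]
  rw [hSS, hSH, ← Matrix.mulVec_add] at hc
  set s := S.transpose.mulVec sh with hs
  have hn := enorm_nonneg s
  set w := grad f x + (hess f x).mulVec s with hw
  have ha' := ha (Fin.cons 1 s)
  rw [augM_mulVec, ← hw] at ha'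
  have hT := taylor hf hLH hLip x s
  have hg : enorm (grad f (x + s)) ≤ L_H / 2 * enorm s ^ 2 + enorm w := by
    have := enorm_add (grad f (x + s) - grad f x - (hess f x).mulVec s) w
    have e : grad f (x + s) - grad f x - (hess f x).mulVec s + w = grad f (x + s) := by
      rw [hw]; abel
    rw [e] at this
    linarith
  have hK : 0 < S_max / α + κ_T := by positivity
  have hSw : enorm (S.mulVec w) ≤ (S_max / α + κ_T) * enorm s ^ 2 := by
    have h1 := enorm_add (S.mulVec w + (1 / α * enorm s) • S.mulVec s)
      ((-(1 / α * enorm s)) • S.mulVec s)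
    rw [neg_smul, add_neg_cancel_right, ← neg_smul, enorm_smul, abs_neg,
      abs_of_nonneg (by positivity)] at h1
    have h2 := (opNorm_bound S s).trans (mul_le_mul_of_nonneg_right hb hn)
    have h3 := mul_le_mul_of_nonneg_left h2 (show 0 ≤ 1 / α * enorm s by positivity)
    have e : 1 / α * enorm s * (S_max * enorm s) = S_max / α * enorm s ^ 2 := by ring
    rw [e] at h3
    linarith
  have hr : 0 < Real.sqrt (1 - ε_S) := Real.sqrt_pos.2 (by linarith)
  have hwS : Real.sqrt (1 - ε_S) * enorm w ≤ enorm (S.mulVec w) := by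
    refine le_of_abs_le (abs_le_of_sq_le_sq ?_ (enorm_nonneg _))
    rw [mul_pow, Real.sq_sqrt (by linarith)]
    exact ha'
  have key : ε / 2 * min (2 / L_H) (Real.sqrt (1 - ε_S) / (S_max / α + κ_T)) ≤ enorm s ^ 2 := by
    rcases le_total (ε / 2) (L_H / 2 * enorm s ^ 2) with h | h
    · refine (mul_le_mul_of_nonneg_left (min_le_left _ _) (by positivity)).trans ?_
      rw [← mul_div_assoc, div_le_iff₀ hLH]
      linarith
    · refine (mul_le_mul_of_nonneg_left (min_le_right _ _) (by positivity)).trans ?_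
      rw [← mul_div_assoc, div_le_iff₀ hK]
      have : ε / 2 ≤ enorm w := by linarith
      nlinarith
  have hR : 0 < Real.sqrt (1 - ε_S) / (S_max / α + κ_T) := by positivity
  have hmin : (ε/2) ^ ((3:ℝ)/2)
        * min ((2:ℝ) ^ ((3:ℝ)/2) / L_H ^ ((3:ℝ)/2))
            ((Real.sqrt (1 - ε_S) / (S_max / α + κ_T)) ^ ((3:ℝ)/2)) ≤ enorm s ^ 3 := by
    rw [← Real.div_rpow (by norm_num) hLH.le]
    have hm : min ((2 / L_H) ^ ((3:ℝ)/2))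
        ((Real.sqrt (1 - ε_S) / (S_max / α + κ_T)) ^ ((3:ℝ)/2))
        ≤ (min (2 / L_H) (Real.sqrt (1 - ε_S) / (S_max / α + κ_T))) ^ ((3:ℝ)/2) := by
      rcases min_choice (2 / L_H) (Real.sqrt (1 - ε_S) / (S_max / α + κ_T)) with h | h
      · rw [h]; exact min_le_left _ _
      · rw [h]; exact min_le_right _ _
    have hpos : 0 ≤ min (2 / L_H) (Real.sqrt (1 - ε_S) / (S_max / α + κ_T)) :=
      le_min (by positivity) hR.le
    refine (mul_le_mul_of_nonneg_left hm (by positivity)).trans ?_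
    rw [← Real.mul_rpow (by positivity) hpos]
    refine (Real.rpow_le_rpow (by positivity) key (by norm_num)).trans (le_of_eq ?_)
    rw [← Real.rpow_natCast (enorm s) 2, ← Real.rpow_mul hn, ← Real.rpow_natCast]
    norm_num
  rw [ge_iff_le, mul_assoc]
  refine (mul_le_mul_of_nonneg_left hmin (by positivity)).trans ?_
  have hc3 : 1 / (3 * α_max) ≤ 1 / (3 * α) := by
    apply one_div_le_one_div_of_le <;> linarith
  have h5 : 1 / (3 * α_max) * enorm s ^ 3 ≤ f x - qhat f x S sh := by
    have := mul_le_mul_of_nonneg_right hc3 (show 0 ≤ enorm s ^ 3 by positivity)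
    linarith
  have h6 := mul_le_mul_of_nonneg_left h5 hθ1.le
  have e : θ / (3 * α_max) * enorm s ^ 3 = θ * (1 / (3 * α_max) * enorm s ^ 3) := by ring
  rw [e]
  linarith

end RARC
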